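/- For every integer d ≥ 2, the squashed entanglement of the antisymmetric state satisfies: E_sq(α_d) ≤ log₂((d+2)/d) if d is even, and E_sq(α_d) ≤ (1/2)·log₂((d+3)/(d−1)) if d is odd. In particular E_sq(α_d) = O(1/d). -/

import Mathlib

open scoped BigOperators
open Classical
open scoped ComplexOrder

noncomputable section

/-- Partial trace over the second tensor factor:
`(ptraceSnd M) a a' = ∑ b, M (a,b) (a',b)`. -/
def ptraceSnd {α β : Type*} [Fintype β] (M : Matrix (α × β) (α × β) ℂ) : Matrix α α ℂ :=
  Matrix.of fun a a' => ∑ b : β, M (a, b) (a', b)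

/-- Von Neumann entropy (in bits) of a matrix, via the eigenvalues of a Hermitian matrix
(with the convention `0 * log₂ 0 = 0`, automatic since `Real.logb 2 0 = 0`). -/
def vnEntropy {ι : Type*} [Fintype ι] [DecidableEq ι] (ρ : Matrix ι ι ℂ) : ℝ :=
  if h : ρ.IsHermitian then -∑ i, h.eigenvalues i * Real.logb 2 (h.eigenvalues i) else 0

/-- Entanglement of formation of a bipartite (density) matrix: the infimum of the average
entropy of entanglement over all finite pure-state ensembles for `ρ`. -/
def EoF {α β : Type*} [Fintype α] [DecidableEq α] [Fintype β] [DecidableEq β]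
    (ρ : Matrix (α × β) (α × β) ℂ) : ℝ :=
  sInf {E : ℝ | ∃ (k : ℕ) (p : Fin k → ℝ) (ψ : Fin k → (α × β → ℂ)),
    (∀ i, 0 ≤ p i) ∧ (∑ i, p i = 1) ∧
    (∀ i, ∑ x, Complex.normSq (ψ i x) = 1) ∧
    (∑ i, p i • Matrix.vecMulVec (ψ i) (star (ψ i)) = ρ) ∧
    E = ∑ i, p i * vnEntropy (ptraceSnd (Matrix.vecMulVec (ψ i) (star (ψ i))))}

/-- The antisymmetric projector `P₂^{(d)} = (1/2)(𝟙 - F)` on `ℂ^d ⊗ ℂ^d`. -/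
def asymProj (d : ℕ) : Matrix (Fin d × Fin d) (Fin d × Fin d) ℂ :=
  Matrix.of fun p q => (1 / 2 : ℂ) *
    ((if p.1 = q.1 ∧ p.2 = q.2 then 1 else 0) - (if p.1 = q.2 ∧ p.2 = q.1 then 1 else 0))

/-- The antisymmetric state `α_d = P₂^{(d)} / binom(d,2)`. -/
def antisymState (d : ℕ) : Matrix (Fin d × Fin d) (Fin d × Fin d) ℂ :=
  (1 / (Nat.choose d 2 : ℂ)) • asymProj d

/-- `α_d^{⊗n}`, viewed as a bipartite state on `((ℂ^d)^{⊗n})_A ⊗ ((ℂ^d)^{⊗n})_B`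
(the `n` first tensor factors grouped on the `A` side, the `n` second ones on the `B` side). -/
def alphaPow (d n : ℕ) :
    Matrix ((Fin n → Fin d) × (Fin n → Fin d)) ((Fin n → Fin d) × (Fin n → Fin d)) ℂ :=
  Matrix.of fun p q => ∏ i : Fin n, antisymState d (p.1 i, p.2 i) (q.1 i, q.2 i)

/-- `(P₂^{(d)})^{⊗n}`, viewed as an operator on `((ℂ^d)^{⊗n})_A ⊗ ((ℂ^d)^{⊗n})_B`
(the `n` first tensor factors grouped on the `A` side, the `n` second ones on the `B` side). -/
def asymPow (d n : ℕ) :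
    Matrix ((Fin n → Fin d) × (Fin n → Fin d)) ((Fin n → Fin d) × (Fin n → Fin d)) ℂ :=
  Matrix.of fun p q => ∏ i : Fin n, asymProj d (p.1 i, p.2 i) (q.1 i, q.2 i)

/-- The antisymmetrizer `P_k^{(d)} = (1/k!) ∑_{σ ∈ S_k} sgn(σ) U_σ` on `(ℂ^d)^{⊗k}`. -/
def asymProjK (d k : ℕ) : Matrix (Fin k → Fin d) (Fin k → Fin d) ℂ :=
  Matrix.of fun f g => (1 / (Nat.factorial k) : ℂ) *
    ∑ σ : Equiv.Perm (Fin k), ((Equiv.Perm.sign σ : ℤ) : ℂ) * (if f = g ∘ σ then 1 else 0)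

/-- Quantum conditional mutual information `I(A;B|E) = H(AE) + H(BE) - H(ABE) - H(E)`
(in bits) of a tripartite (density) matrix. -/
def condMutInfo {α β γ : Type*} [Fintype α] [DecidableEq α] [Fintype β] [DecidableEq β]
    [Fintype γ] [DecidableEq γ] (ρ : Matrix ((α × β) × γ) ((α × β) × γ) ℂ) : ℝ :=
  vnEntropy (Matrix.of fun p q : α × γ => ∑ b : β, ρ ((p.1, b), p.2) ((q.1, b), q.2))
  + vnEntropy (Matrix.of fun p q : β × γ => ∑ a : α, ρ ((a, p.1), p.2) ((a, q.1), q.2))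
  - vnEntropy ρ
  - vnEntropy (Matrix.of fun e e' : γ => ∑ a : α, ∑ b : β, ρ ((a, b), e) ((a, b), e'))

/-- Squashed entanglement: `E_sq(ρ_AB) = inf (1/2) I(A;B|E)` over all finite-dimensional
extensions `ρ_ABE` of `ρ_AB`. -/
def Esq {α β : Type*} [Fintype α] [DecidableEq α] [Fintype β] [DecidableEq β]
    (ρ : Matrix (α × β) (α × β) ℂ) : ℝ :=
  sInf {x : ℝ | ∃ (m : ℕ) (σ : Matrix ((α × β) × Fin m) ((α × β) × Fin m) ℂ),
    σ.PosSemidef ∧ σ.trace = 1 ∧ ptraceSnd σ = ρ ∧ x = (1 / 2) * condMutInfo σ}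

/-- The operator norm `‖·‖_∞` of a matrix, acting on Euclidean space. -/
def opNorm {ι : Type*} [Fintype ι] [DecidableEq ι] (M : Matrix ι ι ℂ) : ℝ :=
  ‖Matrix.toEuclideanCLM (𝕜 := ℂ) M‖

/-- A bipartite (density) matrix is separable if it is a finite convex combination of
product density matrices. -/
def IsSeparableMat {α β : Type*} [Fintype α] [Fintype β]
    (σ : Matrix (α × β) (α × β) ℂ) : Prop :=
  ∃ (k : ℕ) (p : Fin k → ℝ) (ρA : Fin k → Matrix α α ℂ) (ρB : Fin k → Matrix β β ℂ),
    (∀ i, 0 ≤ p i) ∧ (∑ i, p i = 1) ∧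
    (∀ i, (ρA i).PosSemidef) ∧ (∀ i, (ρA i).trace = 1) ∧
    (∀ i, (ρB i).PosSemidef) ∧ (∀ i, (ρB i).trace = 1) ∧
    σ = ∑ i, p i • Matrix.kroneckerMap (· * ·) (ρA i) (ρB i)

/-!
Extend `α_d` by `n` more systems so that all `n + 2` copies of `ℂ^d` are jointly in the
antisymmetric state `P_{n+2} / binom(d, n + 2)`. Tracing out any one copy of `P_k / binom(d, k)`
gives `P_{k-1} / binom(d, k - 1)`, and the entropy of `P_k / binom(d, k)` is `log₂ binom(d, k)`, so
`I(A;B|E) = 2 log₂ binom(d, n + 1) - log₂ binom(d, n + 2) - log₂ binom(d, n)`. The stated bounds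
come from `n = ⌊d/2⌋ - 1`, which makes this smallest.

All partial traces reduce to one computation: up to the factor `k!`, the entries of `P_k` are the
minors `det (δ_{f i, g j})` of the identity matrix.
-/

section Entropy

variable {ι κ : Type*} [Fintype ι] [DecidableEq ι] [Fintype κ] [DecidableEq κ]

theorem vnEntropy_eq_neg_sum_roots_charpoly {ρ : Matrix ι ι ℂ} (hρ : ρ.IsHermitian) :
    vnEntropy ρ = -(ρ.charpoly.roots.map fun z => z.re * Real.logb 2 z.re).sum := by
  rw [vnEntropy, dif_pos hρ, hρ.roots_charpoly_eq_eigenvalues, Multiset.map_map]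
  rfl

theorem vnEntropy_submatrix_equiv {ρ : Matrix ι ι ℂ} (hρ : ρ.IsHermitian) (e : κ ≃ ι) :
    vnEntropy (ρ.submatrix e e) = vnEntropy ρ := by
  have hcharpoly : (ρ.submatrix e e).charpoly = ρ.charpoly := Matrix.charpoly_reindex e.symm ρ
  rw [vnEntropy_eq_neg_sum_roots_charpoly (hρ.submatrix e),
    vnEntropy_eq_neg_sum_roots_charpoly hρ, hcharpoly]

theorem vnEntropy_inv_smul_of_isStarProjection {P : Matrix ι ι ℂ} (hP : IsStarProjection P)
    {r : ℝ} (hr : r ≠ 0) (htrace : P.trace = r) :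
    vnEntropy (r⁻¹ • P) = Real.logb 2 r := by
  have hρ : (r⁻¹ • P).IsHermitian := (IsSelfAdjoint.all r⁻¹).smul hP.isSelfAdjoint
  have eigenvalues_eq (i : ι) : hρ.eigenvalues i = 0 ∨ hρ.eigenvalues i = r⁻¹ := by
    have hmem : r * hρ.eigenvalues i ∈ spectrum ℝ P := by
      have := spectrum.smul_mem_smul_iff (r := Units.mk0 r hr) |>.2
        (hρ.eigenvalues_mem_spectrum_real i)
      simpa [Units.smul_def, smul_smul, hr] using this
    rcases hP.isIdempotentElem.spectrum_subset ℝ hmem with h | h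
    · exact .inl ((mul_eq_zero.1 h).resolve_left hr)
    · exact .inr (eq_inv_of_mul_eq_one_right h)
  have sum_eigenvalues : ∑ i, hρ.eigenvalues i = 1 := by
    have h := hρ.trace_eq_sum_eigenvalues
    rw [Matrix.trace_smul, htrace, Complex.real_smul, ← Complex.ofReal_mul,
      inv_mul_cancel₀ hr] at h
    exact Complex.ofReal_injective (by simpa using h.symm)
  calc vnEntropy (r⁻¹ • P)
      = -∑ i, hρ.eigenvalues i * Real.logb 2 (hρ.eigenvalues i) := dif_pos hρ
    _ = ∑ i, hρ.eigenvalues i * Real.logb 2 r := by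
      rw [← Finset.sum_neg_distrib]
      refine Finset.sum_congr rfl fun i _ => ?_
      rcases eigenvalues_eq i with h | h <;> simp [h, Real.logb_inv]
    _ = Real.logb 2 r := by rw [← Finset.sum_mul, sum_eigenvalues, one_mul]

end Entropy

section SquashedEntanglement

variable {α β γ δ : Type*} [Fintype α] [DecidableEq α] [Fintype β] [DecidableEq β]
  [Fintype γ] [DecidableEq γ] [Fintype δ] [DecidableEq δ]

theorem condMutInfo_submatrix_equiv {σ : Matrix ((α × β) × γ) ((α × β) × γ) ℂ}
    (hσ : σ.IsHermitian) (e : δ ≃ γ) :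
    condMutInfo (σ.submatrix (Prod.map id e) (Prod.map id e)) = condMutInfo σ := by
  unfold condMutInfo
  refine congrArg₂ (· - ·) (congrArg₂ (· - ·) (congrArg₂ (· + ·) ?AE ?BE) ?ABE) ?E
  case AE =>
    refine vnEntropy_submatrix_equiv (ρ := Matrix.of fun p q : α × γ =>
      ∑ b : β, σ ((p.1, b), p.2) ((q.1, b), q.2)) ?_ ((Equiv.refl α).prodCongr e)
    ext p q
    simp [hσ.apply]
  case BE =>
    refine vnEntropy_submatrix_equiv (ρ := Matrix.of fun p q : β × γ =>
      ∑ a : α, σ ((a, p.1), p.2) ((a, q.1), q.2)) ?_ ((Equiv.refl β).prodCongr e)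
    ext p q
    simp [hσ.apply]
  case ABE => exact vnEntropy_submatrix_equiv hσ ((Equiv.refl (α × β)).prodCongr e)
  case E =>
    refine vnEntropy_submatrix_equiv (ρ := Matrix.of fun p q : γ =>
      ∑ a : α, ∑ b : β, σ ((a, b), p) ((a, b), q)) ?_ e
    ext p q
    simp [hσ.apply]

/- Without strong subadditivity the set in `Esq` is not known to be bounded below; if it is not, its
`sInf` has the junk value `0`, which `hnonneg` accounts for. -/
theorem Esq_ptraceSnd_le {σ : Matrix ((α × β) × γ) ((α × β) × γ) ℂ} (hσ : σ.PosSemidef)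
    (htrace : σ.trace = 1) (hnonneg : 0 ≤ condMutInfo σ) :
    Esq (ptraceSnd σ) ≤ 1 / 2 * condMutInfo σ := by
  unfold Esq
  set extensionValues := {x : ℝ | ∃ (m : ℕ) (τ : Matrix ((α × β) × Fin m) ((α × β) × Fin m) ℂ),
    τ.PosSemidef ∧ τ.trace = 1 ∧ ptraceSnd τ = ptraceSnd σ ∧ x = 1 / 2 * condMutInfo τ}
  by_cases hbdd : BddBelow extensionValues
  · let e : Fin (Fintype.card γ) ≃ γ := (Fintype.equivFin γ).symm
    refine csInf_le hbdd
      ⟨_, σ.submatrix (Prod.map id e) (Prod.map id e), hσ.submatrix _, ?_, ?_, ?_⟩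
    · rw [← htrace]
      exact ((Equiv.refl (α × β)).prodCongr e).sum_comp fun p => σ p p
    · ext p q
      exact e.sum_comp fun c => σ (p, c) (q, c)
    · rw [condMutInfo_submatrix_equiv hσ.isHermitian]
  · rw [Real.sInf_of_not_bddBelow hbdd]
    positivity

end SquashedEntanglement

section SubmatrixOne

variable {R α : Type*} [CommRing R] [DecidableEq α] {k : ℕ}

theorem det_submatrix_one_of_not_injective {f : Fin k → α} (hf : ¬ Function.Injective f)
    (g : Fin k → α) : ((1 : Matrix α α R).submatrix f g).det = 0 := by
  obtain ⟨i, j, hij, hne⟩ := Function.not_injective_iff.1 hf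
  exact Matrix.det_zero_of_row_eq hne (funext fun x => by
    simp only [Matrix.submatrix_apply, Matrix.one_apply, hij])

theorem det_submatrix_one_cons_of_notMem_range {b : α} {f : Fin k → α} (hb : b ∉ Set.range f)
    (g : Fin k → α) :
    ((1 : Matrix α α R).submatrix (Fin.cons b f) (Fin.cons b g)).det =
      ((1 : Matrix α α R).submatrix f g).det := by
  have ne_of_mem (i : Fin k) : f i ≠ b := fun h => hb ⟨i, h⟩
  rw [Matrix.det_succ_column_zero, Fin.sum_univ_succ]
  simp [Matrix.one_apply, ne_of_mem, Matrix.submatrix_submatrix, Function.comp_def]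

/- The summand is `0` when `b` is a value of `f`, and the determinant on the right otherwise. -/
theorem sum_det_submatrix_one_cons [Fintype α] (f g : Fin k → α) :
    ∑ b, ((1 : Matrix α α R).submatrix (Fin.cons b f) (Fin.cons b g)).det =
      ((Fintype.card α : R) - k) * ((1 : Matrix α α R).submatrix f g).det := by
  by_cases hf : Function.Injective f
  · have hcard : (Finset.univ.image f)ᶜ.card = Fintype.card α - k := by
      rw [Finset.card_compl, Finset.card_image_of_injective _ hf, Finset.card_univ,
        Fintype.card_fin]
    have hle : k ≤ Fintype.card α := by simpa using Fintype.card_le_of_injective f hf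
    rw [← Finset.sum_subset (Finset.subset_univ (Finset.univ.image f)ᶜ),
      Finset.sum_congr rfl fun b hb =>
        det_submatrix_one_cons_of_notMem_range (by simpa using hb) g,
      Finset.sum_const, hcard, nsmul_eq_mul, Nat.cast_sub hle]
    intro b _ hb
    refine det_submatrix_one_of_not_injective (fun h => ?_) _
    exact (Fin.cons_injective_iff.1 h).1 (by simpa using hb)
  · rw [det_submatrix_one_of_not_injective hf, mul_zero]
    exact Finset.sum_eq_zero fun b _ =>
      det_submatrix_one_of_not_injective (fun h => hf (Fin.cons_injective_iff.1 h).2) _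

end SubmatrixOne

section Antisymmetrizer

variable (d k : ℕ)

theorem asymProjK_apply_eq_det (f g : Fin k → Fin d) :
    asymProjK d k f g =
      (k.factorial : ℂ)⁻¹ * ((1 : Matrix (Fin d) (Fin d) ℂ).submatrix f g).det := by
  rw [← Matrix.det_transpose, Matrix.det_apply', asymProjK, Matrix.of_apply, one_div]
  congr! 3 with p
  simp [Matrix.one_apply, Finset.prod_ite_zero, funext_iff]

variable {d k}

theorem asymProjK_comp_perm (p : Equiv.Perm (Fin k)) (f g : Fin k → Fin d) :
    asymProjK d k (f ∘ p) (g ∘ p) = asymProjK d k f g := by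
  simp only [asymProjK_apply_eq_det, ← Matrix.submatrix_submatrix, Matrix.det_submatrix_equiv_self]

theorem asymProjK_comp_perm_right (p : Equiv.Perm (Fin k)) (f g : Fin k → Fin d) :
    asymProjK d k f (g ∘ p) = ((Equiv.Perm.sign p : ℤ) : ℂ) * asymProjK d k f g := by
  have h := Matrix.det_permute' p ((1 : Matrix (Fin d) (Fin d) ℂ).submatrix f g)
  rw [Matrix.submatrix_submatrix, Function.comp_id] at h
  rw [asymProjK_apply_eq_det, asymProjK_apply_eq_det, h, mul_left_comm]

variable (d k)

theorem isIdempotentElem_asymProjK : IsIdempotentElem (asymProjK d k) := by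
  ext f g
  have sum_perm (p : Equiv.Perm (Fin k)) :
      ∑ x, asymProjK d k f x * (((Equiv.Perm.sign p : ℤ) : ℂ) * if x = g ∘ p then 1 else 0) =
        asymProjK d k f g := by
    have sign_mul_sign : ((Equiv.Perm.sign p : ℤ) : ℂ) * ((Equiv.Perm.sign p : ℤ) : ℂ) = 1 := by
      exact_mod_cast Int.units_coe_mul_self (Equiv.Perm.sign p)
    simp only [mul_ite, mul_one, mul_zero, Finset.sum_ite_eq', Finset.mem_univ, if_true,
      asymProjK_comp_perm_right]
    rw [mul_right_comm, sign_mul_sign, one_mul]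
  calc (asymProjK d k * asymProjK d k) f g
      = 1 / (k.factorial : ℂ) * ∑ p : Equiv.Perm (Fin k), ∑ x, asymProjK d k f x *
          (((Equiv.Perm.sign p : ℤ) : ℂ) * if x = g ∘ p then 1 else 0) := by
        rw [Finset.sum_comm, Matrix.mul_apply, Finset.mul_sum]
        refine Finset.sum_congr rfl fun x _ => ?_
        rw [← Finset.mul_sum, mul_left_comm]
        rfl
    _ = asymProjK d k f g := by
        simp only [sum_perm, Finset.sum_const, Finset.card_univ, Fintype.card_perm,
          Fintype.card_fin, nsmul_eq_mul]
        rw [one_div, inv_mul_cancel_left₀ (by exact_mod_cast k.factorial_ne_zero)]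

theorem isHermitian_asymProjK : (asymProjK d k).IsHermitian := by
  ext f g
  simp only [Matrix.conjTranspose_apply, asymProjK_apply_eq_det, star_mul', star_inv₀, star_natCast]
  rw [← Matrix.det_conjTranspose, Matrix.conjTranspose_submatrix, Matrix.conjTranspose_one]

theorem isStarProjection_asymProjK : IsStarProjection (asymProjK d k) :=
  ⟨isIdempotentElem_asymProjK d k, isHermitian_asymProjK d k⟩

theorem posSemidef_asymProjK : (asymProjK d k).PosSemidef := by
  rw [← (isIdempotentElem_asymProjK d k).eq]
  nth_rw 1 [← (isHermitian_asymProjK d k).eq]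
  exact Matrix.posSemidef_conjTranspose_mul_self _

variable {d k}

theorem sum_asymProjK_insertNth (i : Fin (k + 1)) (f g : Fin k → Fin d) :
    ∑ b, asymProjK d (k + 1) (i.insertNth b f) (i.insertNth b g) =
      ((d : ℂ) - k) / (k + 1) * asymProjK d k f g := by
  simp only [← Fin.cons_comp_cycleRange, asymProjK_comp_perm]
  simp only [asymProjK_apply_eq_det]
  rw [← Finset.mul_sum, sum_det_submatrix_one_cons, Fintype.card_fin, Nat.factorial_succ]
  push_cast
  rw [mul_inv]
  ring

end Antisymmetrizer

theorem cast_choose_succ (K : Type*) [Field K] [CharZero K] (d k : ℕ) :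
    (d.choose (k + 1) : K) = d.choose k * (((d : K) - k) / (k + 1)) := by
  have h : ((d : K) + 1) * d.choose k = (d.choose k + d.choose (k + 1)) * (k + 1) := by
    exact_mod_cast Nat.add_one_mul_choose_eq d k
  have hk : (k : K) + 1 ≠ 0 := by exact_mod_cast k.succ_ne_zero
  field_simp
  linear_combination -h

theorem cast_choose_ne_zero (K : Type*) [AddMonoidWithOne K] [CharZero K] {d k : ℕ} (hk : k ≤ d) :
    (d.choose k : K) ≠ 0 :=
  Nat.cast_ne_zero.2 (Nat.choose_pos hk).ne'

theorem trace_asymProjK (d k : ℕ) : (asymProjK d k).trace = d.choose k := by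
  induction k with
  | zero => simp [Matrix.trace, asymProjK]
  | succ k ih =>
    calc (asymProjK d (k + 1)).trace
        = ∑ f, ∑ b, asymProjK d (k + 1) (Fin.cons b f) (Fin.cons b f) := by
          rw [Finset.sum_comm, ← Fintype.sum_prod_type', Matrix.trace,
            ← (Fin.consEquiv fun _ => Fin d).sum_comp]
          rfl
      _ = ((d : ℂ) - k) / (k + 1) * (asymProjK d k).trace := by
          simp only [← Fin.insertNth_zero', sum_asymProjK_insertNth, ← Finset.mul_sum]
          rfl
      _ = d.choose (k + 1) := by rw [ih, cast_choose_succ, mul_comm]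

/-- The state `P_k / binom(d, k)` on `k` copies of `ℂ^d`, maximally mixed on the antisymmetric
subspace; it is `0` when `k > d`. -/
def asymStateK (d k : ℕ) : Matrix (Fin k → Fin d) (Fin k → Fin d) ℂ :=
  (d.choose k : ℝ)⁻¹ • asymProjK d k

section AsymStateK

variable {d k : ℕ}

theorem asymStateK_apply (f g : Fin k → Fin d) :
    asymStateK d k f g = (d.choose k : ℂ)⁻¹ * asymProjK d k f g := by
  simp [asymStateK]

theorem posSemidef_asymStateK (d k : ℕ) : (asymStateK d k).PosSemidef :=
  (posSemidef_asymProjK d k).smul (by positivity)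

theorem trace_asymStateK (hk : k ≤ d) : (asymStateK d k).trace = 1 := by
  simp [asymStateK, trace_asymProjK, cast_choose_ne_zero ℂ hk]

theorem vnEntropy_asymStateK (hk : k ≤ d) :
    vnEntropy (asymStateK d k) = Real.logb 2 (d.choose k) :=
  vnEntropy_inv_smul_of_isStarProjection (isStarProjection_asymProjK d k)
    (cast_choose_ne_zero ℝ hk) (by simp [trace_asymProjK])

theorem sum_asymStateK_insertNth (hk : k + 1 ≤ d) (i : Fin (k + 1)) (f g : Fin k → Fin d) :
    ∑ b, asymStateK d (k + 1) (i.insertNth b f) (i.insertNth b g) = asymStateK d k f g := by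
  have hne := cast_choose_ne_zero ℂ hk
  rw [cast_choose_succ] at hne
  simp only [asymStateK_apply, ← Finset.mul_sum, sum_asymProjK_insertNth, cast_choose_succ]
  rw [mul_inv, ← mul_assoc, mul_assoc _ _ (((d : ℂ) - k) / (k + 1)),
    inv_mul_cancel₀ (right_ne_zero_of_mul hne), mul_one]

theorem asymProjK_two (a b a' b' : Fin d) :
    asymProjK d 2 ![a, b] ![a', b'] = asymProj d (a, b) (a', b') := by
  rw [asymProjK_apply_eq_det, Matrix.det_fin_two]
  simp only [Matrix.submatrix_apply, Matrix.one_apply, asymProj, Matrix.of_apply,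
    Nat.factorial_two]
  split_ifs <;> simp_all

theorem sum_asymStateK_cons_cons {n : ℕ} (hn : n + 2 ≤ d) (a b a' b' : Fin d) :
    ∑ e : Fin n → Fin d, asymStateK d (n + 2) (Fin.cons a (Fin.cons b e : Fin (n + 1) → Fin d))
      (Fin.cons a' (Fin.cons b' e : Fin (n + 1) → Fin d)) = antisymState d (a, b) (a', b') := by
  induction n with
  | zero =>
    calc _ = asymStateK d 2 ![a, b] ![a', b'] := by
          rw [Fintype.sum_unique]
          congr!
      _ = antisymState d (a, b) (a', b') := by
          rw [asymStateK_apply, asymProjK_two, antisymState, Matrix.smul_apply, one_div,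
            smul_eq_mul]
  | succ n ih =>
    rw [← ih (by omega), ← (Fin.consEquiv fun _ => Fin d).sum_comp, Fintype.sum_prod_type_right]
    refine Finset.sum_congr rfl fun e _ => ?_
    rw [← sum_asymStateK_insertNth hn (Fin.succ (Fin.succ 0))]
    simp only [Fin.insertNth_succ_cons, Fin.insertNth_zero']
    rfl

end AsymStateK

section Extension

/-- Splits off the first two entries of a tuple: these are the systems `A` and `B`, while the
remaining `n` ones form the system `E`. -/
def consConsEquiv (α : Type*) (n : ℕ) : (α × α) × (Fin n → α) ≃ (Fin (n + 2) → α) :=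
  (Equiv.prodAssoc α α (Fin n → α)).trans
    (((Equiv.refl α).prodCongr (Fin.consEquiv fun _ => α)).trans (Fin.consEquiv fun _ => α))

/-- The extension of the antisymmetric state by `n` further systems, all `n + 2` systems together
being in the state `asymStateK d (n + 2)`. -/
def antisymExtension (d n : ℕ) :
    Matrix ((Fin d × Fin d) × (Fin n → Fin d)) ((Fin d × Fin d) × (Fin n → Fin d)) ℂ :=
  (asymStateK d (n + 2)).submatrix (consConsEquiv (Fin d) n) (consConsEquiv (Fin d) n)

variable {d n : ℕ}

theorem antisymExtension_apply (a b a' b' : Fin d) (e e' : Fin n → Fin d) :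
    antisymExtension d n ((a, b), e) ((a', b'), e') =
      asymStateK d (n + 2) (Fin.cons a (Fin.cons b e : Fin (n + 1) → Fin d))
        (Fin.cons a' (Fin.cons b' e' : Fin (n + 1) → Fin d)) :=
  rfl

theorem posSemidef_antisymExtension (d n : ℕ) : (antisymExtension d n).PosSemidef :=
  (posSemidef_asymStateK d (n + 2)).submatrix _

theorem trace_antisymExtension (hn : n + 2 ≤ d) : (antisymExtension d n).trace = 1 := by
  rw [← trace_asymStateK hn]
  exact (consConsEquiv (Fin d) n).sum_comp fun f => asymStateK d (n + 2) f f

theorem ptraceSnd_antisymExtension (hn : n + 2 ≤ d) :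
    ptraceSnd (antisymExtension d n) = antisymState d := by
  ext ⟨a, b⟩ ⟨a', b'⟩
  exact sum_asymStateK_cons_cons hn a b a' b'

theorem sum_antisymExtension_fst (hn : n + 2 ≤ d) (b b' : Fin d) (e e' : Fin n → Fin d) :
    ∑ a, antisymExtension d n ((a, b), e) ((a, b'), e') =
      asymStateK d (n + 1) (Fin.cons b e) (Fin.cons b' e') := by
  simp only [← sum_asymStateK_insertNth hn 0, Fin.insertNth_zero', antisymExtension_apply]

theorem sum_antisymExtension_snd (hn : n + 2 ≤ d) (a a' : Fin d) (e e' : Fin n → Fin d) :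
    ∑ b, antisymExtension d n ((a, b), e) ((a', b), e') =
      asymStateK d (n + 1) (Fin.cons a e) (Fin.cons a' e') := by
  simp only [← sum_asymStateK_insertNth hn (Fin.succ 0), Fin.insertNth_succ_cons,
    Fin.insertNth_zero', antisymExtension_apply]

theorem sum_sum_antisymExtension (hn : n + 2 ≤ d) (e e' : Fin n → Fin d) :
    ∑ a, ∑ b, antisymExtension d n ((a, b), e) ((a, b), e') = asymStateK d n e e' := by
  simp only [sum_antisymExtension_snd hn, ← Fin.insertNth_zero',
    sum_asymStateK_insertNth (show n + 1 ≤ d by omega)]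

theorem condMutInfo_antisymExtension_eq_choose (hn : n + 2 ≤ d) :
    condMutInfo (antisymExtension d n) =
      Real.logb 2 (d.choose (n + 1)) + Real.logb 2 (d.choose (n + 1))
        - Real.logb 2 (d.choose (n + 2)) - Real.logb 2 (d.choose n) := by
  let split : Fin d × (Fin n → Fin d) ≃ (Fin (n + 1) → Fin d) := Fin.consEquiv fun _ => Fin d
  have marginal_AE : (Matrix.of fun p q : Fin d × (Fin n → Fin d) =>
      ∑ b, antisymExtension d n ((p.1, b), p.2) ((q.1, b), q.2)) =
      (asymStateK d (n + 1)).submatrix split split := by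
    ext p q
    exact sum_antisymExtension_snd hn _ _ _ _
  have marginal_BE : (Matrix.of fun p q : Fin d × (Fin n → Fin d) =>
      ∑ a, antisymExtension d n ((a, p.1), p.2) ((a, q.1), q.2)) =
      (asymStateK d (n + 1)).submatrix split split := by
    ext p q
    exact sum_antisymExtension_fst hn _ _ _ _
  have marginal_E : (Matrix.of fun e e' : Fin n → Fin d =>
      ∑ a, ∑ b, antisymExtension d n ((a, b), e) ((a, b), e')) = asymStateK d n := by
    ext e e'
    exact sum_sum_antisymExtension hn e e'
  have hermitian (k : ℕ) : (asymStateK d k).IsHermitian := (posSemidef_asymStateK d k).isHermitian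
  rw [condMutInfo, marginal_AE, marginal_BE, marginal_E, antisymExtension,
    vnEntropy_submatrix_equiv (hermitian _), vnEntropy_submatrix_equiv (hermitian _),
    vnEntropy_asymStateK (by omega), vnEntropy_asymStateK hn, vnEntropy_asymStateK (by omega)]

theorem condMutInfo_antisymExtension (hn : n + 2 ≤ d) :
    condMutInfo (antisymExtension d n) =
      Real.logb 2 (((n + 2) * (d - n)) / ((n + 1) * (d - n - 1))) := by
  have hd : (n : ℝ) + 2 ≤ d := by exact_mod_cast hn
  have hC : (d.choose n : ℝ) ≠ 0 := cast_choose_ne_zero ℝ (by omega)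
  have h₀ : 0 < ((d : ℝ) - n) / (n + 1) := div_pos (by linarith) (by positivity)
  have h₁ : 0 < ((d : ℝ) - (n + 1)) / (n + 1 + 1) := div_pos (by linarith) (by positivity)
  have hratio : (((n : ℝ) + 2) * (d - n)) / ((n + 1) * (d - n - 1)) =
      ((d : ℝ) - n) / (n + 1) / (((d : ℝ) - (n + 1)) / (n + 1 + 1)) := by
    rw [div_div_div_eq]
    ring
  rw [condMutInfo_antisymExtension_eq_choose hn, hratio, Real.logb_div h₀.ne' h₁.ne',
    cast_choose_succ ℝ d (n + 1), cast_choose_succ ℝ d n]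
  push_cast
  rw [Real.logb_mul (mul_ne_zero hC h₀.ne') h₁.ne', Real.logb_mul hC h₀.ne']
  ring

theorem Esq_antisymState_le_of_add_two_le (hn : n + 2 ≤ d) :
    Esq (antisymState d) ≤
      1 / 2 * Real.logb 2 (((n + 2) * (d - n)) / ((n + 1) * (d - n - 1))) := by
  have hd : (n : ℝ) + 2 ≤ d := by exact_mod_cast hn
  have hpos : 0 < ((n : ℝ) + 1) * (d - n - 1) := mul_pos (by positivity) (by linarith)
  have hnonneg : 0 ≤ condMutInfo (antisymExtension d n) := by
    rw [condMutInfo_antisymExtension hn]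
    refine Real.logb_nonneg one_lt_two ((one_le_div hpos).2 ?_)
    linarith
  rw [← ptraceSnd_antisymExtension hn, ← condMutInfo_antisymExtension hn]
  exact Esq_ptraceSnd_le (posSemidef_antisymExtension d n) (trace_antisymExtension hn) hnonneg

end Extension

/-- for every integer `d ≥ 2`, the squashed entanglement of the
antisymmetric state satisfies `E_sq(α_d) ≤ log₂((d+2)/d)` for even `d` and
`E_sq(α_d) ≤ (1/2) log₂((d+3)/(d-1))` for odd `d`. -/
theorem Esq_antisymState_le (d : ℕ) (hd : 2 ≤ d) :
    (Even d → Esq (antisymState d) ≤ Real.logb 2 (((d : ℝ) + 2) / d)) ∧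
    (Odd d → Esq (antisymState d) ≤
      (1 / 2) * Real.logb 2 (((d : ℝ) + 3) / ((d : ℝ) - 1))) := by
  constructor
  · rintro ⟨m, hm⟩
    obtain ⟨n, rfl⟩ : ∃ n, d = 2 * n + 2 := ⟨m - 1, by omega⟩
    refine (Esq_antisymState_le_of_add_two_le (show n + 2 ≤ 2 * n + 2 by omega)).trans_eq ?_
    have hsq : ((n : ℝ) + 2) * ((2 * n + 2 : ℕ) - n) / ((n + 1) * ((2 * n + 2 : ℕ) - n - 1)) =
        (((2 * n + 2 : ℕ) + 2) / (2 * n + 2 : ℕ)) ^ 2 := by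
      push_cast
      rw [show (2 * n + 2 - n - 1 : ℝ) = n + 1 by ring]
      field_simp
      ring
    rw [hsq, Real.logb_pow]
    ring
  · rintro ⟨m, hm⟩
    obtain ⟨n, rfl⟩ : ∃ n, d = 2 * n + 3 := ⟨m - 1, by omega⟩
    refine (Esq_antisymState_le_of_add_two_le (show n + 2 ≤ 2 * n + 3 by omega)).trans_eq ?_
    congr 2
    push_cast
    rw [show (2 * n + 3 - n - 1 : ℝ) = n + 2 by ring,
      show (2 * n + 3 - 1 : ℝ) = 2 * (n + 1) by ring]
    field_simp
    ring

end
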